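/- Assume θ'(s) = −τ(s) for all s and that A(s) + k(s) sin θ(s) ≠ 0 for all s. Let h(s,v) = −(Ef − Fe)(s,v)/(Eg − Ge)(s,v), and let V : ℝ × ℝ → ℝ be a C² function with ∂V/∂s(s,v₀) = h(s, V(s,v₀)), V(0,v₀) = v₀ and V(s,0) = 0. Then the Poincaré return map π(v₀) = V(L,v₀) associated to the principal cycle c satisfies π'(0) = exp(−∫₀^L A'(s)/(A(s) + k(s) sin θ(s)) ds). In particular, c is a hyperbolic principal cycle (π'(0) ≠ 1) if and only if the characteristic exponent Λ = ∫₀^L A'(s)/(A(s) + k(s) sin θ(s)) ds is nonzero. -/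

import Mathlib

/-! The curve `c` is a solution `v = 0` of `dv/ds = h(s, v)`, so the derivative `Y(s) = ∂V/∂v₀(s, 0)`
of the flow satisfies the variational equation `Y' = ∂h/∂v(s, 0) · Y`, `Y(0) = 1`, whence
`Y(L) = exp ∫₀ᴸ ∂h/∂v(s, 0) ds` (`linear_ode_eq_exp`, `variational_equation`).

It remains to compute `∂h/∂v(s, 0) = -A'/(A + k sin θ)`. Since `θ' = -τ`, the frame `(t, w, N)` is a
positively oriented orthonormal rotation-minimizing frame: `w' = -k cos θ · t`, `N' = k sin θ · t`.
Writing `α = c + v w + P N` with `P = A v²/2 + B v³/6 + v⁴ C`, one gets `α_s = p t + P_s N` with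
`p = 1 - v k cos θ + P k sin θ`, and `α_v = w + P_v N`. In these coordinates the common factor
`√(EG - F²)` of `e, f, g` cancels, the numerator `Ef - Fe` is `A' v + O(v²)` and the denominator
`Eg - Ge` equals `A + k sin θ` at `v = 0` (`hasDerivAt_slope`). -/

open Real intervalIntegral
open scoped RealInnerProductSpace

noncomputable def det3 (u v w : EuclideanSpace ℝ (Fin 3)) : ℝ :=
  Matrix.det (Matrix.of fun i j => ![u, v, w] j i)

/-! ### Partial derivatives of functions of two variables -/

lemma hasDerivAt_partial_fst {F : ℝ → ℝ → ℝ} {s v : ℝ}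
    (hF : DifferentiableAt ℝ (Function.uncurry F) (s, v)) :
    HasDerivAt (fun u => F u v) (fderiv ℝ (Function.uncurry F) (s, v) (1, 0)) s := by
  have h1 : HasDerivAt (fun u : ℝ => (u, v)) ((1 : ℝ), (0 : ℝ)) s :=
    (hasDerivAt_id s).prodMk (hasDerivAt_const s v)
  exact hF.hasFDerivAt.comp_hasDerivAt s h1

lemma hasDerivAt_partial_snd {F : ℝ → ℝ → ℝ} {s v : ℝ}
    (hF : DifferentiableAt ℝ (Function.uncurry F) (s, v)) :
    HasDerivAt (fun u => F s u) (fderiv ℝ (Function.uncurry F) (s, v) (0, 1)) v := by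
  have h1 : HasDerivAt (fun u : ℝ => (s, u)) ((0 : ℝ), (1 : ℝ)) v :=
    (hasDerivAt_const v s).prodMk (hasDerivAt_id v)
  exact hF.hasFDerivAt.comp_hasDerivAt v h1

lemma exists_partials {F : ℝ → ℝ → ℝ} (hF : ContDiff ℝ (⊤ : ℕ∞) (Function.uncurry F)) :
    ∃ Fs Fv : ℝ → ℝ → ℝ, ContDiff ℝ (⊤ : ℕ∞) (Function.uncurry Fs) ∧
      ContDiff ℝ (⊤ : ℕ∞) (Function.uncurry Fv) ∧
      (∀ s v, HasDerivAt (fun u => F u v) (Fs s v) s) ∧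
      (∀ s v, HasDerivAt (fun u => F s u) (Fv s v) v) := by
  have hd : Differentiable ℝ (Function.uncurry F) := hF.differentiable (by simp)
  have hfd : ContDiff ℝ (⊤ : ℕ∞) (fderiv ℝ (Function.uncurry F)) :=
    hF.fderiv_right (by simp)
  refine ⟨fun s v => fderiv ℝ (Function.uncurry F) (s, v) (1, 0),
    fun s v => fderiv ℝ (Function.uncurry F) (s, v) (0, 1), ?_, ?_,
    fun s v => hasDerivAt_partial_fst (hd _), fun s v => hasDerivAt_partial_snd (hd _)⟩
  · exact hfd.clm_apply contDiff_const
  · exact hfd.clm_apply contDiff_const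

lemma hasDerivAt_clm_vec {Φ : ℝ → (ℝ × ℝ →L[ℝ] ℝ)} {Φ' : ℝ × ℝ →L[ℝ] ℝ} {x : ℝ}
    (hΦ : HasDerivAt Φ Φ' x) (z : ℝ × ℝ) : HasDerivAt (fun u => Φ u z) (Φ' z) x :=
  (ContinuousLinearMap.apply ℝ ℝ z).hasFDerivAt.comp_hasDerivAt x hΦ

/-! ### The variational equation -/

/-- The initial-condition derivative of a flow fixing `v = 0` solves the linearized equation;
the exchange of `∂/∂s` and `∂/∂v₀` is the symmetry of the second derivative of `V`. -/
lemma variational_equation {V h : ℝ → ℝ → ℝ} {a : ℝ → ℝ}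
    (hV2 : ContDiff ℝ 2 (Function.uncurry V))
    (hVode : ∀ s v₀, deriv (fun u => V u v₀) s = h s (V s v₀))
    (hVz : ∀ s, V s 0 = 0) (hha : ∀ s, HasDerivAt (h s) (a s) 0) (s : ℝ) :
    HasDerivAt (fun u => deriv (fun v₀ => V u v₀) 0) (a s * deriv (fun v₀ => V s v₀) 0) s := by
  have hd : Differentiable ℝ (Function.uncurry V) := hV2.differentiable (by simp)
  have hfd : Differentiable ℝ (fderiv ℝ (Function.uncurry V)) :=
    (hV2.fderiv_right (m := 1) (by norm_num)).differentiable (by simp)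
  have hY : ∀ u, deriv (fun v₀ => V u v₀) 0 = fderiv ℝ (Function.uncurry V) (u, 0) (0, 1) :=
    fun u => (hasDerivAt_partial_snd (hd _)).deriv
  have hX : ∀ v, h s (V s v) = fderiv ℝ (Function.uncurry V) (s, v) (1, 0) :=
    fun v => by rw [← hVode]; exact (hasDerivAt_partial_fst (hd _)).deriv
  have hsymm : IsSymmSndFDerivAt ℝ (Function.uncurry V) (s, 0) :=
    hV2.contDiffAt.isSymmSndFDerivAt (by simp)
  have h1 : HasDerivAt (fun u : ℝ => (u, (0 : ℝ))) ((1 : ℝ), (0 : ℝ)) s :=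
    (hasDerivAt_id s).prodMk (hasDerivAt_const s _)
  have h2 : HasDerivAt (fun u : ℝ => (s, u)) ((0 : ℝ), (1 : ℝ)) 0 :=
    (hasDerivAt_const _ s).prodMk (hasDerivAt_id _)
  have e1 : HasDerivAt (fun u => fderiv ℝ (Function.uncurry V) (u, 0) (0, 1))
      (fderiv ℝ (fderiv ℝ (Function.uncurry V)) (s, 0) (1, 0) (0, 1)) s :=
    hasDerivAt_clm_vec ((hfd (s, 0)).hasFDerivAt.comp_hasDerivAt s h1) (0, 1)
  have e2 : HasDerivAt (fun v => fderiv ℝ (Function.uncurry V) (s, v) (1, 0))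
      (fderiv ℝ (fderiv ℝ (Function.uncurry V)) (s, 0) (0, 1) (1, 0)) 0 :=
    hasDerivAt_clm_vec ((hfd (s, 0)).hasFDerivAt.comp_hasDerivAt (0 : ℝ) h2) (1, 0)
  have e3 : HasDerivAt (fun v => h s (V s v))
      (a s * fderiv ℝ (Function.uncurry V) (s, 0) (0, 1)) 0 := by
    have hs : HasDerivAt (h s) (a s) (V s 0) := by rw [hVz]; exact hha s
    exact hs.comp 0 (hasDerivAt_partial_snd (hd _))
  simp only [hY]
  simp only [hX] at e3
  rw [e3.unique e2, ← hsymm.eq (1, 0) (0, 1)]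
  exact e1

lemma linear_ode_eq_exp {Y a : ℝ → ℝ} (ha : Continuous a)
    (hY : ∀ s, HasDerivAt Y (a s * Y s) s) (hY0 : Y 0 = 1) (L : ℝ) :
    Y L = Real.exp (∫ s in (0 : ℝ)..L, a s) := by
  have hI : ∀ s, HasDerivAt (fun x => ∫ u in (0 : ℝ)..x, a u) (a s) s := fun s =>
    intervalIntegral.integral_hasDerivAt_right (ha.intervalIntegrable _ _)
      (ha.stronglyMeasurableAtFilter _ _) ha.continuousAt
  have hZ : ∀ s, HasDerivAt (fun x => Y x * Real.exp (-∫ u in (0 : ℝ)..x, a u)) 0 s := fun s => by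
    refine ((hY s).mul (hI s).neg.exp).congr_deriv ?_
    simp only [Pi.neg_apply]
    ring
  have hc := is_const_of_deriv_eq_zero (fun s => (hZ s).differentiableAt)
    (fun s => (hZ s).deriv) L 0
  simp only [hY0, intervalIntegral.integral_same, neg_zero, Real.exp_zero, mul_one] at hc
  rw [Real.exp_neg] at hc
  exact (mul_inv_eq_one₀ (Real.exp_ne_zero _)).1 hc

/-! ### Linear algebra in an orthonormal frame -/

lemma det3_eq (u v w : EuclideanSpace ℝ (Fin 3)) : det3 u v w =
    u 0 * v 1 * w 2 - u 0 * w 1 * v 2 - v 0 * u 1 * w 2 + v 0 * w 1 * u 2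
      + w 0 * u 1 * v 2 - w 0 * v 1 * u 2 := by
  simp [det3, Matrix.det_fin_three]

lemma det3_frame (T W M : EuclideanSpace ℝ (Fin 3)) (hdet : det3 T W M = 1)
    (p q r x y z : ℝ) :
    det3 (p • T + q • M) (W + r • M) (x • T + y • W + z • M) = p * (z - r * y) - q * x := by
  have : det3 (p • T + q • M) (W + r • M) (x • T + y • W + z • M)
      = (p * (z - r * y) - q * x) * det3 T W M := by
    simp only [det3_eq, PiLp.add_apply, PiLp.smul_apply, smul_eq_mul]
    ring
  rw [this, hdet, mul_one]

lemma frame_rotation {T n b : EuclideanSpace ℝ (Fin 3)} (hu : ‖T‖ = 1 ∧ ‖n‖ = 1 ∧ ‖b‖ = 1)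
    (ho : ⟪T, n⟫ = 0 ∧ ⟪T, b⟫ = 0 ∧ ⟪n, b⟫ = 0)
    (hc : b 0 = T 1 * n 2 - T 2 * n 1 ∧ b 1 = T 2 * n 0 - T 0 * n 2 ∧
      b 2 = T 0 * n 1 - T 1 * n 0) {x y : ℝ} (hxy : y ^ 2 + x ^ 2 = 1) :
    det3 T (x • n + y • b) (x • b - y • n) = 1 ∧ ⟪T, T⟫ = 1 ∧
    ⟪x • n + y • b, x • n + y • b⟫ = 1 ∧ ⟪x • b - y • n, x • b - y • n⟫ = 1 ∧
    ⟪T, x • n + y • b⟫ = 0 ∧ ⟪T, x • b - y • n⟫ = 0 ∧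
    ⟪x • n + y • b, x • b - y • n⟫ = 0 := by
  obtain ⟨h1, h2, h3⟩ := ho
  obtain ⟨u1, u2, u3⟩ := hu
  have q1 : ⟪T, T⟫ = 1 := by simp [u1]
  have q2 : ⟪n, n⟫ = 1 := by simp [u2]
  have q3 : ⟪b, b⟫ = 1 := by simp [u3]
  have h3' : ⟪b, n⟫ = 0 := by rw [real_inner_comm, h3]
  refine ⟨?_, q1, ?_, ?_, ?_, ?_, ?_⟩
  · have e1 : det3 T (x • n + y • b) (x • b - y • n) = (y ^ 2 + x ^ 2) * det3 T n b := by
      simp only [det3_eq, PiLp.add_apply, PiLp.sub_apply, PiLp.smul_apply, smul_eq_mul]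
      ring
    -- `det (T, n, b) = ⟨T × n, b⟩ = ‖b‖²`
    have e2 : det3 T n b = b 0 * b 0 + b 1 * b 1 + b 2 * b 2 := by
      rw [det3_eq]; obtain ⟨c0, c1, c2⟩ := hc
      linear_combination -b 0 * c0 - b 1 * c1 - b 2 * c2
    have e3 : b 0 * b 0 + b 1 * b 1 + b 2 * b 2 = 1 := by
      rw [← q3, PiLp.inner_apply, Fin.sum_univ_three]; simp [sq]
    rw [e1, hxy, e2, e3, one_mul]
  all_goals
    simp only [inner_add_left, inner_add_right, inner_sub_left, inner_sub_right,
      real_inner_smul_left, real_inner_smul_right, h1, h2, h3, h3', q2, q3]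
    first | ring1 | linear_combination hxy

/-! ### The direction field at `v = 0` -/

/-- The quotient `-(Ef - Fe)/(Eg - Ge)` along a fixed `s`, in frame coordinates and with the factor
`√(EG - F²)` kept. Here `κ₁ = k cos θ`, `κ₂ = k sin θ`, and `Ps, Pv, …` are the partial derivatives
of the height function as functions of `v`. -/
lemma hasDerivAt_slope {p ps pv Ps Pv Pss Psv Pvv : ℝ → ℝ} {a a' κ₁ κ₂ : ℝ}
    {E F G de df dg : ℝ → ℝ}
    (hE : ∀ v, E v = p v ^ 2 + Ps v ^ 2) (hF : ∀ v, F v = Ps v * Pv v)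
    (hG : ∀ v, G v = 1 + Pv v ^ 2)
    (hde : ∀ v, de v = p v * ((-(p v * κ₂) + Pss v) - Pv v * (p v * κ₁)) -
      Ps v * (ps v + Ps v * κ₂))
    (hdf : ∀ v, df v = p v * Psv v - Ps v * pv v)
    (hdg : ∀ v, dg v = p v * Pvv v)
    (p0 : p 0 = 1) (Ps0 : Ps 0 = 0) (Pv0 : Pv 0 = 0) (Psv0 : Psv 0 = 0) (Pss0 : Pss 0 = 0)
    (Pvv0 : Pvv 0 = a)
    (dp : DifferentiableAt ℝ p 0) (dps : DifferentiableAt ℝ ps 0)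
    (dpv : DifferentiableAt ℝ pv 0) (dPs : HasDerivAt Ps 0 0) (dPv : DifferentiableAt ℝ Pv 0)
    (dPss : DifferentiableAt ℝ Pss 0) (dPsv : HasDerivAt Psv a' 0)
    (dPvv : DifferentiableAt ℝ Pvv 0) (ha : a + κ₂ ≠ 0) :
    HasDerivAt (fun v => -(E v * (df v / √(E v * G v - F v ^ 2)) -
        F v * (de v / √(E v * G v - F v ^ 2))) /
      (E v * (dg v / √(E v * G v - F v ^ 2)) - G v * (de v / √(E v * G v - F v ^ 2))))
      (-(a' / (a + κ₂))) 0 := by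
  obtain rfl : E = _ := funext hE
  obtain rfl : F = _ := funext hF
  obtain rfl : G = _ := funext hG
  obtain rfl : de = _ := funext hde
  obtain rfl : df = _ := funext hdf
  obtain rfl : dg = _ := funext hdg
  have hp := dp.hasDerivAt
  have hps := dps.hasDerivAt
  have hpv := dpv.hasDerivAt
  have hPv := dPv.hasDerivAt
  have hPss := dPss.hasDerivAt
  have hPvv := dPvv.hasDerivAt
  have dE := (hp.pow 2).add (dPs.pow 2)
  have dF := dPs.mul hPv
  have dG := (hPv.pow 2).const_add 1
  have dde := (hp.mul (((hp.mul_const κ₂).neg.add hPss).sub (hPv.mul (hp.mul_const κ₁)))).sub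
    (dPs.mul (hps.add (dPs.mul_const κ₂)))
  have ddf := (hp.mul dPsv).sub (dPs.mul hpv)
  have ddg := hp.mul hPvv
  have hnum := ((dE.mul ddf).sub (dF.mul dde)).neg
  have hden := (dE.mul ddg).sub (dG.mul dde)
  have key := hnum.div hden (by simpa [p0, Ps0, Pv0, Pss0, Pvv0] using ha)
  have hW : ∀ᶠ v in nhds (0 : ℝ),
      (p v ^ 2 + Ps v ^ 2) * (1 + Pv v ^ 2) - (Ps v * Pv v) ^ 2 > 0 := by
    have hc := ((dE.mul dG).sub (dF.pow 2)).continuousAt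
    refine hc.eventually_const_lt (u := 0) ?_
    simp [p0, Ps0, Pv0]
  refine (key.congr_of_eventuallyEq ?_).congr_deriv ?_
  · filter_upwards [hW] with v hv
    have hs := (Real.sqrt_pos.2 hv).ne'
    simp only [← mul_div_assoc, ← sub_div, ← neg_div]
    rw [div_div_div_cancel_right₀ hs]
    rfl
  · simp [p0, Ps0, Pv0, Pss0, Pvv0, Psv0]
    field_simp

/-! ### The rotating frame -/

/-- With `θ' = -τ` the frame `(t, w, N)` is rotation-minimizing: `w'` and `N'` are tangential. -/
lemma hasDerivAt_frame {t n b w N : ℝ → EuclideanSpace ℝ (Fin 3)} {θ : ℝ → ℝ} {k τ s : ℝ}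
    (dn : HasDerivAt n ((-k) • t s + τ • b s) s) (db : HasDerivAt b ((-τ) • n s) s)
    (dθ : HasDerivAt θ (-τ) s)
    (hw : ∀ s, w s = Real.cos (θ s) • n s + Real.sin (θ s) • b s)
    (hN : ∀ s, N s = Real.cos (θ s) • b s - Real.sin (θ s) • n s) :
    HasDerivAt w ((-(k * Real.cos (θ s))) • t s) s ∧
      HasDerivAt N ((k * Real.sin (θ s)) • t s) s := by
  obtain rfl : w = _ := funext hw
  obtain rfl : N = _ := funext hN
  constructor
  · refine ((dθ.cos.smul dn).add (dθ.sin.smul db)).congr_deriv ?_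
    module
  · refine ((dθ.cos.smul db).sub (dθ.sin.smul dn)).congr_deriv ?_
    module

theorem statement11
    (L : ℝ) (hL : 0 < L)
    (c t n b : ℝ → EuclideanSpace ℝ (Fin 3)) (k τ : ℝ → ℝ)
    (hct : ContDiff ℝ (⊤ : ℕ∞) c) (htt : ContDiff ℝ (⊤ : ℕ∞) t) (hnt : ContDiff ℝ (⊤ : ℕ∞) n)
    (hbt : ContDiff ℝ (⊤ : ℕ∞) b) (hkt : ContDiff ℝ (⊤ : ℕ∞) k) (hτt : ContDiff ℝ (⊤ : ℕ∞) τ)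
    (hcL : Function.Periodic c L) (htL : Function.Periodic t L)
    (hnL : Function.Periodic n L) (hbL : Function.Periodic b L)
    (hkL : Function.Periodic k L) (hτL : Function.Periodic τ L)
    (hkpos : ∀ s, 0 < k s)
    (htc : ∀ s, t s = deriv c s)
    (hunit : ∀ s, ‖t s‖ = 1 ∧ ‖n s‖ = 1 ∧ ‖b s‖ = 1)
    (horth : ∀ s, ⟪t s, n s⟫ = 0 ∧ ⟪t s, b s⟫ = 0 ∧ ⟪n s, b s⟫ = 0)
    (hcross : ∀ s, b s 0 = t s 1 * n s 2 - t s 2 * n s 1 ∧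
      b s 1 = t s 2 * n s 0 - t s 0 * n s 2 ∧
      b s 2 = t s 0 * n s 1 - t s 1 * n s 0)
    (hfr1 : ∀ s, deriv t s = k s • n s)
    (hfr2 : ∀ s, deriv n s = (-(k s)) • t s + τ s • b s)
    (hfr3 : ∀ s, deriv b s = (-(τ s)) • n s)
    (θ : ℝ → ℝ) (hθt : ContDiff ℝ (⊤ : ℕ∞) θ)
    (w N : ℝ → EuclideanSpace ℝ (Fin 3))
    (hw : ∀ s, w s = Real.cos (θ s) • n s + Real.sin (θ s) • b s)
    (hN : ∀ s, N s = Real.cos (θ s) • b s - Real.sin (θ s) • n s)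
    (A B : ℝ → ℝ) (C : ℝ → ℝ → ℝ)
    (hAt : ContDiff ℝ (⊤ : ℕ∞) A) (hBt : ContDiff ℝ (⊤ : ℕ∞) B)
    (hCt : ContDiff ℝ (⊤ : ℕ∞) (Function.uncurry C))
    (hAL : Function.Periodic A L) (hBL : Function.Periodic B L)
    (hCL : ∀ v, Function.Periodic (fun s => C s v) L)
    (hC0 : ∀ s, C s 0 = 0)
    (α : ℝ → ℝ → EuclideanSpace ℝ (Fin 3))
    (hα : ∀ s v, α s v = c s + v • w s +
      (A s * v ^ 2 / 2 + B s * v ^ 3 / 6 + v ^ 4 * C s v) • N s)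
    (hθ' : ∀ s, deriv θ s = -τ s)
    (αs αv αss αsv αvv : ℝ → ℝ → EuclideanSpace ℝ (Fin 3))
    (hαs : ∀ s v, αs s v = deriv (fun u => α u v) s)
    (hαv : ∀ s v, αv s v = deriv (fun u => α s u) v)
    (hαss : ∀ s v, αss s v = deriv (fun u => αs u v) s)
    (hαsv : ∀ s v, αsv s v = deriv (fun u => αs s u) v)
    (hαvv : ∀ s v, αvv s v = deriv (fun u => αv s u) v)
    (Ef Ff Gf : ℝ → ℝ → ℝ)
    (hE : ∀ s v, Ef s v = ⟪αs s v, αs s v⟫)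
    (hF : ∀ s v, Ff s v = ⟪αs s v, αv s v⟫)
    (hG : ∀ s v, Gf s v = ⟪αv s v, αv s v⟫)
    (ef ff gf : ℝ → ℝ → ℝ)
    (he : ∀ s v, ef s v =
      det3 (αs s v) (αv s v) (αss s v) / Real.sqrt (Ef s v * Gf s v - Ff s v ^ 2))
    (hf : ∀ s v, ff s v =
      det3 (αs s v) (αv s v) (αsv s v) / Real.sqrt (Ef s v * Gf s v - Ff s v ^ 2))
    (hg : ∀ s v, gf s v =
      det3 (αs s v) (αv s v) (αvv s v) / Real.sqrt (Ef s v * Gf s v - Ff s v ^ 2))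
    (humb : ∀ s, A s + k s * Real.sin (θ s) ≠ 0)
    (h : ℝ → ℝ → ℝ)
    (hh : ∀ s v, h s v = -(Ef s v * ff s v - Ff s v * ef s v) /
      (Ef s v * gf s v - Gf s v * ef s v))
    (V : ℝ → ℝ → ℝ)
    (hV2 : ContDiff ℝ 2 (Function.uncurry V))
    (hVode : ∀ s v₀, deriv (fun u => V u v₀) s = h s (V s v₀))
    (hV0 : ∀ v₀, V 0 v₀ = v₀)
    (hVz : ∀ s, V s 0 = 0) :
    deriv (fun v₀ => V L v₀) 0 =
      Real.exp (-∫ s in (0:ℝ)..L, deriv A s / (A s + k s * Real.sin (θ s))) ∧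
    (deriv (fun v₀ => V L v₀) 0 ≠ 1 ↔
      (∫ s in (0:ℝ)..L, deriv A s / (A s + k s * Real.sin (θ s))) ≠ 0) := by
  have hd : ∀ {X : Type} [NormedAddCommGroup X] [NormedSpace ℝ X] {f : ℝ → X},
      ContDiff ℝ (⊤ : ℕ∞) f → ∀ s, HasDerivAt f (deriv f s) s :=
    fun hf s => (hf.differentiable (by simp) s).hasDerivAt
  have dc : ∀ s, HasDerivAt c (t s) s := fun s => htc s ▸ hd hct s
  have dn : ∀ s, HasDerivAt n ((-(k s)) • t s + τ s • b s) s := fun s => hfr2 s ▸ hd hnt s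
  have db : ∀ s, HasDerivAt b ((-(τ s)) • n s) s := fun s => hfr3 s ▸ hd hbt s
  have dθ : ∀ s, HasDerivAt θ (-τ s) s := fun s => hθ' s ▸ hd hθt s
  have dw := fun s => (hasDerivAt_frame (dn s) (db s) (dθ s) hw hN).1
  have dN := fun s => (hasDerivAt_frame (dn s) (db s) (dθ s) hw hN).2
  have dt : ∀ s, HasDerivAt t ((k s * Real.cos (θ s)) • w s - (k s * Real.sin (θ s)) • N s) s := by
    intro s
    refine (hd htt s).congr_deriv ?_
    have hcs := Real.sin_sq_add_cos_sq (θ s)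
    rw [hfr1, hw, hN]
    -- `n = cos θ · w - sin θ · N`
    have : k s • n s = (k s * (Real.sin (θ s) ^ 2 + Real.cos (θ s) ^ 2)) • n s := by
      rw [hcs, mul_one]
    rw [this]
    module
  -- partial derivatives of the height function `P`
  obtain ⟨Cs, Cv, hCs, hCv, dCs, dCv⟩ := exists_partials hCt
  obtain ⟨Css, Csv, hCss, hCsv, dCss, dCsv⟩ := exists_partials hCs
  obtain ⟨Cvs, Cvv, hCvs, hCvv, dCvs, dCvv⟩ := exists_partials hCv
  have hA1 : ContDiff ℝ (⊤ : ℕ∞) (deriv A) := (contDiff_infty_iff_deriv.1 hAt).2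
  have hB1 : ContDiff ℝ (⊤ : ℕ∞) (deriv B) := (contDiff_infty_iff_deriv.1 hBt).2
  have slice : ∀ {F : ℝ → ℝ → ℝ}, ContDiff ℝ (⊤ : ℕ∞) (Function.uncurry F) →
      ∀ s, Differentiable ℝ (F s) := fun hF s v =>
    (hasDerivAt_partial_snd (hF.differentiable (by simp) (s, v))).differentiableAt
  let κ₁ : ℝ → ℝ := fun s => k s * Real.cos (θ s)
  let κ₂ : ℝ → ℝ := fun s => k s * Real.sin (θ s)
  have dκ₁ : ∀ s, HasDerivAt κ₁ (deriv κ₁ s) s := hd (hkt.mul hθt.cos)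
  have dκ₂ : ∀ s, HasDerivAt κ₂ (deriv κ₂ s) s := hd (hkt.mul hθt.sin)
  let P : ℝ → ℝ → ℝ := fun s v => A s * v ^ 2 / 2 + B s * v ^ 3 / 6 + v ^ 4 * C s v
  let Ps : ℝ → ℝ → ℝ := fun s v =>
    deriv A s * v ^ 2 / 2 + deriv B s * v ^ 3 / 6 + v ^ 4 * Cs s v
  let Pss : ℝ → ℝ → ℝ := fun s v =>
    deriv (deriv A) s * v ^ 2 / 2 + deriv (deriv B) s * v ^ 3 / 6 + v ^ 4 * Css s v
  let Pv : ℝ → ℝ → ℝ := fun s v =>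
    A s * v + B s * v ^ 2 / 2 + (4 * v ^ 3 * C s v + v ^ 4 * Cv s v)
  let Psv : ℝ → ℝ → ℝ := fun s v =>
    deriv A s * v + deriv B s * v ^ 2 / 2 + (4 * v ^ 3 * Cs s v + v ^ 4 * Csv s v)
  let Pvv : ℝ → ℝ → ℝ := fun s v =>
    A s + B s * v + (12 * v ^ 2 * C s v + 8 * v ^ 3 * Cv s v + v ^ 4 * Cvv s v)
  have dPs : ∀ s v, HasDerivAt (fun u => P u v) (Ps s v) s := fun s v =>
    ((((hd hAt s).mul_const _).div_const _).add (((hd hBt s).mul_const _).div_const _)).add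
      ((dCs s v).const_mul _)
  have dPss : ∀ s v, HasDerivAt (fun u => Ps u v) (Pss s v) s := fun s v =>
    ((((hd hA1 s).mul_const _).div_const _).add (((hd hB1 s).mul_const _).div_const _)).add
      ((dCss s v).const_mul _)
  have poly : ∀ (x y : ℝ) {D D' : ℝ → ℝ}, (∀ v, HasDerivAt D (D' v) v) → ∀ v,
      HasDerivAt (fun v => x * v ^ 2 / 2 + y * v ^ 3 / 6 + v ^ 4 * D v)
        (x * v + y * v ^ 2 / 2 + (4 * v ^ 3 * D v + v ^ 4 * D' v)) v := by
    intro x y D D' hD v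
    have := ((((hasDerivAt_pow 2 v).const_mul x).div_const 2).add
      (((hasDerivAt_pow 3 v).const_mul y).div_const 6)).add ((hasDerivAt_pow 4 v).mul (hD v))
    refine this.congr_deriv ?_
    norm_num
    ring
  have dPv : ∀ s v, HasDerivAt (fun u => P s u) (Pv s v) v := fun s v =>
    poly (A s) (B s) (dCv s) v
  have dPsv : ∀ s v, HasDerivAt (fun u => Ps s u) (Psv s v) v := fun s v =>
    poly (deriv A s) (deriv B s) (dCsv s) v
  have poly' : ∀ (x y : ℝ) {D D' : ℝ → ℝ}, (∀ v, HasDerivAt D (D' v) v) →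
      Differentiable ℝ D' → ∀ v,
      HasDerivAt (fun v => x * v + y * v ^ 2 / 2 + (4 * v ^ 3 * D v + v ^ 4 * D' v))
        (x + y * v + (12 * v ^ 2 * D v + 8 * v ^ 3 * D' v + v ^ 4 * deriv D' v)) v := by
    intro x y D D' hD hD' v
    have := (((hasDerivAt_id v).const_mul x).add
      (((hasDerivAt_pow 2 v).const_mul y).div_const 2)).add
      ((((hasDerivAt_pow 3 v).const_mul 4).mul (hD v)).add
        ((hasDerivAt_pow 4 v).mul (hD' v).hasDerivAt))
    refine this.congr_deriv ?_
    norm_num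
    ring
  have dPvv : ∀ s v, HasDerivAt (fun u => Pv s u) (Pvv s v) v := fun s v => by
    have := poly' (A s) (B s) (dCv s) (slice hCv s) v
    rwa [(dCvv s v).deriv] at this
  have dPsv0 : ∀ s, HasDerivAt (fun u => Psv s u) (deriv A s) 0 := fun s => by
    have := poly' (deriv A s) (deriv B s) (dCsv s) (slice hCsv s) 0
    simpa using this
  -- tangential component `p` of `α_s`
  let p : ℝ → ℝ → ℝ := fun s v => 1 - v * κ₁ s + P s v * κ₂ s
  let ps : ℝ → ℝ → ℝ := fun s v => -(v * deriv κ₁ s) + (Ps s v * κ₂ s + P s v * deriv κ₂ s)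
  let pv : ℝ → ℝ → ℝ := fun s v => -(κ₁ s) + Pv s v * κ₂ s
  have dps : ∀ s v, HasDerivAt (fun u => p u v) (ps s v) s := fun s v =>
    (((dκ₁ s).const_mul v).const_sub 1).add ((dPs s v).mul (dκ₂ s))
  have dpv : ∀ s v, HasDerivAt (fun u => p s u) (pv s v) v := fun s v => by
    refine ((((hasDerivAt_id v).mul_const (κ₁ s)).const_sub 1).add
      ((dPv s v).mul_const (κ₂ s))).congr_deriv ?_
    simp [pv]
  -- the derivatives of `α` in the frame `(t, w, N)`
  have eαs : ∀ s v, αs s v = p s v • t s + Ps s v • N s := fun s v => by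
    rw [hαs]
    simp only [hα]
    refine HasDerivAt.deriv ((((dc s).add ((dw s).const_smul v)).add
      ((dPs s v).smul (dN s))).congr_deriv ?_)
    simp only [p, κ₁, κ₂]
    module
  have eαv : ∀ s v, αv s v = w s + Pv s v • N s := fun s v => by
    rw [hαv]
    simp only [hα]
    refine HasDerivAt.deriv (((((hasDerivAt_id v).smul_const (w s)).const_add (c s)).add
      ((dPv s v).smul_const (N s))).congr_deriv ?_)
    module
  have eαss : ∀ s v, αss s v = (ps s v + Ps s v * κ₂ s) • t s + (p s v * κ₁ s) • w s +
      (-(p s v * κ₂ s) + Pss s v) • N s := fun s v => by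
    rw [hαss]
    simp only [eαs]
    refine HasDerivAt.deriv ((((dps s v).smul (dt s)).add
      ((dPss s v).smul (dN s))).congr_deriv ?_)
    simp only [κ₁, κ₂]
    module
  have eαsv : ∀ s v, αsv s v = pv s v • t s + (0 : ℝ) • w s + Psv s v • N s := fun s v => by
    rw [hαsv]
    simp only [eαs]
    refine HasDerivAt.deriv ((((dpv s v).smul_const (t s)).add
      ((dPsv s v).smul_const (N s))).congr_deriv ?_)
    module
  have eαvv : ∀ s v, αvv s v = (0 : ℝ) • t s + (0 : ℝ) • w s + Pvv s v • N s := fun s v => by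
    rw [hαvv]
    simp only [eαv]
    refine HasDerivAt.deriv ((((dPvv s v).smul_const (N s)).const_add (w s)).congr_deriv ?_)
    module
  have frame : ∀ s, det3 (t s) (w s) (N s) = 1 ∧ ⟪t s, t s⟫ = 1 ∧ ⟪w s, w s⟫ = 1 ∧
      ⟪N s, N s⟫ = 1 ∧ ⟪t s, w s⟫ = 0 ∧ ⟪t s, N s⟫ = 0 ∧ ⟪w s, N s⟫ = 0 := fun s => by
    rw [hw, hN]
    exact frame_rotation (hunit s) (horth s) (hcross s) (Real.sin_sq_add_cos_sq (θ s))
  have eEFG : ∀ s v, Ef s v = p s v ^ 2 + Ps s v ^ 2 ∧ Ff s v = Ps s v * Pv s v ∧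
      Gf s v = 1 + Pv s v ^ 2 := fun s v => by
    obtain ⟨-, h1, h2, h3, h4, h5, h6⟩ := frame s
    have h5' : ⟪N s, t s⟫ = 0 := by rw [real_inner_comm, h5]
    have h6' : ⟪N s, w s⟫ = 0 := by rw [real_inner_comm, h6]
    refine ⟨?_, ?_, ?_⟩
    · rw [hE, eαs]
      simp only [inner_add_left, inner_add_right, real_inner_smul_left, real_inner_smul_right,
        h1, h3, h5, h5']
      ring
    · rw [hF, eαs, eαv]
      simp only [inner_add_left, inner_add_right, real_inner_smul_left, real_inner_smul_right,
        h3, h4, h5, h6']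
      ring
    · rw [hG, eαv]
      simp only [inner_add_left, inner_add_right, real_inner_smul_left, real_inner_smul_right,
        h2, h3, h6, h6']
      ring
  have hslope : ∀ s, HasDerivAt (h s) (-(deriv A s / (A s + k s * Real.sin (θ s)))) 0 := by
    intro s
    have := hasDerivAt_slope (p := p s) (ps := ps s) (pv := pv s) (Ps := Ps s) (Pv := Pv s)
      (Pss := Pss s) (Psv := Psv s) (Pvv := Pvv s) (a := A s) (a' := deriv A s)
      (κ₁ := κ₁ s) (κ₂ := κ₂ s) (E := Ef s) (F := Ff s) (G := Gf s)
      (de := fun v => det3 (αs s v) (αv s v) (αss s v))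
      (df := fun v => det3 (αs s v) (αv s v) (αsv s v))
      (dg := fun v => det3 (αs s v) (αv s v) (αvv s v))
      (fun v => (eEFG s v).1) (fun v => (eEFG s v).2.1) (fun v => (eEFG s v).2.2)
      (fun v => by rw [eαs, eαv, eαss, det3_frame _ _ _ (frame s).1])
      (fun v => by rw [eαs, eαv, eαsv, det3_frame _ _ _ (frame s).1]; ring)
      (fun v => by rw [eαs, eαv, eαvv, det3_frame _ _ _ (frame s).1]; ring)
      (by simp [p, P]) (by simp [Ps]) (by simp [Pv]) (by simp [Psv]) (by simp [Pss])
      (by simp [Pvv])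
      (dpv s 0).differentiableAt ?_ ?_ ((dPsv s 0).congr_deriv (by simp [Psv]))
      (dPvv s 0).differentiableAt ?_ (dPsv0 s) ?_ (humb s)
    · refine this.congr_of_eventuallyEq (Filter.Eventually.of_forall fun v => ?_)
      simp only [hh, he, hf, hg]
    · have h1 := (dPsv s 0).differentiableAt
      have h2 := (dPv s 0).differentiableAt
      exact (differentiableAt_id.mul_const _).neg.add ((h1.mul_const _).add (h2.mul_const _))
    · exact ((dPvv s 0).differentiableAt.mul_const _).const_add _
    · have := slice hCss s
      simp only [Pss]
      fun_prop
    · have h1 := slice hCt s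
      have h2 := slice hCv s
      have h3 := slice hCvv s
      simp only [Pvv]
      fun_prop
  have hcont : Continuous fun s => -(deriv A s / (A s + k s * Real.sin (θ s))) :=
    (hA1.continuous.div (hAt.continuous.add (hkt.mul hθt.sin).continuous) humb).neg
  have hY := linear_ode_eq_exp hcont (variational_equation hV2 hVode hVz hslope)
    (by simp [hV0]) L
  rw [intervalIntegral.integral_neg] at hY
  refine ⟨hY, ?_⟩
  rw [hY, Ne, Real.exp_eq_one_iff, neg_eq_zero]
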